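/- Assume that the mod-2 reductions m̄ʲ (j ∈ J) of the twist vectors are linearly independent over 𝔽₂, and let t ∈ ℤ^K be such that t̄ lies in their 𝔽₂-span, so that there is a unique j₀ ∈ {0,1}^J with M̄·j̄₀ = t̄. Set k₀ := (M·j₀ + t)/2 ∈ ℤ^K and ζ_t := μ^{j₀}·x^{k₀} ∈ A (where μ^{j₀} := ∏_j μ_j^{(j₀)_j}). Then ζ_t is ⋆_t-self-dual, i.e. ζ_t⋆·x^t = ζ_t, and multiplication by ζ_t induces isomorphisms h⁺(A) → h⁺(A, x^t) and h⁻(A) → h⁻(A, x^t). -/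

import Mathlib

/-! ### Tate cohomology of an abelian group with involution -/

def kerP {M : Type*} [AddCommGroup M] (f : M →+ M) : AddSubgroup M :=
  (AddMonoidHom.id M - f).ker

def kerM {M : Type*} [AddCommGroup M] (f : M →+ M) : AddSubgroup M :=
  (AddMonoidHom.id M + f).ker

def imP {M : Type*} [AddCommGroup M] (f : M →+ M) : AddSubgroup M :=
  (AddMonoidHom.id M + f).range

def imM {M : Type*} [AddCommGroup M] (f : M →+ M) : AddSubgroup M :=
  (AddMonoidHom.id M - f).range

abbrev hPlus {M : Type*} [AddCommGroup M] (f : M →+ M) :=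
  kerP f ⧸ (imP f).addSubgroupOf (kerP f)

abbrev hMinus {M : Type*} [AddCommGroup M] (f : M →+ M) :=
  kerM f ⧸ (imM f).addSubgroupOf (kerM f)

def hPlusMk {M : Type*} [AddCommGroup M] (f : M →+ M) (x : M) (hx : x ∈ kerP f) :
    hPlus f := QuotientAddGroup.mk ⟨x, hx⟩

def hMinusMk {M : Type*} [AddCommGroup M] (f : M →+ M) (x : M) (hx : x ∈ kerM f) :
    hMinus f := QuotientAddGroup.mk ⟨x, hx⟩


/-! ### The twisted polynomial ring and its duality involution -/

abbrev TwGens (I J : Type) := (I × Bool) ⊕ J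
abbrev TwMon (I J K : Type) := (TwGens I J → ℕ) × (K → ℤ)
abbrev TwPolyRing (I J K : Type) := AddMonoidAlgebra ℤ (TwMon I J K)

variable {I J K : Type}

def twSwap : TwGens I J → TwGens I J
  | Sum.inl (i, b) => Sum.inl (i, !b)
  | Sum.inr j => Sum.inr j

def twTwist [Fintype I] [Fintype J] (c : I → K → ℤ) (m : J → K → ℤ)
    (f : TwGens I J → ℕ) : K → ℤ :=
  fun k => (∑ i : I, ((f (Sum.inl (i, false)) : ℤ) + (f (Sum.inl (i, true)) : ℤ)) * c i k)
    + ∑ j : J, (f (Sum.inr j) : ℤ) * m j k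

lemma twTwist_add [Fintype I] [Fintype J] (c : I → K → ℤ) (m : J → K → ℤ)
    (f f' : TwGens I J → ℕ) :
    twTwist c m (f + f') = twTwist c m f + twTwist c m f' := by
  funext k
  simp only [twTwist, Pi.add_apply, Nat.cast_add, add_mul, Finset.sum_add_distrib]
  ring

lemma twTwist_zero [Fintype I] [Fintype J] (c : I → K → ℤ) (m : J → K → ℤ) :
    twTwist c m (0 : TwGens I J → ℕ) = 0 := by
  funext k
  simp [twTwist]

def twStarMon [Fintype I] [Fintype J] (c : I → K → ℤ) (m : J → K → ℤ) :
    TwMon I J K →+ TwMon I J K where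
  toFun := fun fg => (fg.1 ∘ twSwap, -fg.2 + twTwist c m fg.1)
  map_zero' := by
    refine Prod.ext rfl ?_
    simp [twTwist_zero]
  map_add' := by
    rintro ⟨f, g⟩ ⟨f', g'⟩
    refine Prod.ext rfl ?_
    show -(g + g') + twTwist c m (f + f') = (-g + twTwist c m f) + (-g' + twTwist c m f')
    rw [twTwist_add]
    abel

noncomputable def twStar [Fintype I] [Fintype J] (c : I → K → ℤ) (m : J → K → ℤ) :
    TwPolyRing I J K →+* TwPolyRing I J K :=
  AddMonoidAlgebra.mapDomainRingHom ℤ (twStarMon c m)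

noncomputable def twX (t : K → ℤ) : TwPolyRing I J K :=
  AddMonoidAlgebra.single ((0 : TwGens I J → ℕ), t) 1

noncomputable def twStarT [Fintype I] [Fintype J] (c : I → K → ℤ) (m : J → K → ℤ)
    (t : K → ℤ) : TwPolyRing I J K →+ TwPolyRing I J K :=
  (AddMonoidHom.mulRight (twX t)).comp (twStar c m).toAddMonoidHom

/-!
Both `⋆` and `⋆_t` permute the monomial basis, and multiplication by `ζ_t` is an
equivariant injection of the first permutation module into the second. A monomial fixed by `⋆_t`
has `μ`-exponents solving `M̄ · j̄ = t̄`, so linear independence makes them congruent to `j₀` mod 2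
and hence at least `j₀`: the fixed monomials all lie in the image. Off the image, the
`⋆_t`-orbits therefore have two elements, and the span of a free orbit has no Tate cohomology.
-/

/-! ### Equivariant retractions and Tate cohomology -/

section Tate

variable {M N : Type*} [AddCommGroup M] [AddCommGroup N]

lemma mem_kerP {f : M →+ M} {a : M} : a ∈ kerP f ↔ f a = a := sub_eq_zero.trans eq_comm

lemma mem_kerM {f : M →+ M} {a : M} : a ∈ kerM f ↔ f a = -a := add_eq_zero_iff_neg_eq.trans eq_comm

lemma mem_imP {f : M →+ M} {a : M} : a ∈ imP f ↔ ∃ w, w + f w = a := Iff.rfl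

lemma mem_imM {f : M →+ M} {a : M} : a ∈ imM f ↔ ∃ w, w - f w = a := Iff.rfl

lemma kerM_eq_kerP_neg (f : M →+ M) : kerM f = kerP (-f) := by
  ext a
  simp [mem_kerM, mem_kerP, neg_eq_iff_eq_neg]

lemma imM_eq_imP_neg (f : M →+ M) : imM f = imP (-f) := by
  ext a
  simp [mem_imM, mem_imP, sub_eq_add_neg]

lemma map_mem_kerP {f : M →+ M} {g : N →+ N} {φ : M →+ N} (h : ∀ a, φ (f a) = g (φ a))
    {a : M} (ha : a ∈ kerP f) : φ a ∈ kerP g := by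
  rw [mem_kerP] at ha ⊢
  rw [← h, ha]

lemma map_mem_imP {f : M →+ M} {g : N →+ N} {φ : M →+ N} (h : ∀ a, φ (f a) = g (φ a))
    {a : M} (ha : a ∈ imP f) : φ a ∈ imP g := by
  obtain ⟨w, rfl⟩ := mem_imP.1 ha
  exact mem_imP.2 ⟨φ w, by rw [map_add, h]⟩

lemma map_mem_kerM {f : M →+ M} {g : N →+ N} {φ : M →+ N} (h : ∀ a, φ (f a) = g (φ a))
    {a : M} (ha : a ∈ kerM f) : φ a ∈ kerM g := by
  rw [kerM_eq_kerP_neg] at ha ⊢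
  exact map_mem_kerP (by simpa using h) ha

lemma map_mem_imM {f : M →+ M} {g : N →+ N} {φ : M →+ N} (h : ∀ a, φ (f a) = g (φ a))
    {a : M} (ha : a ∈ imM f) : φ a ∈ imM g := by
  rw [imM_eq_imP_neg] at ha ⊢
  exact map_mem_imP (by simpa using h) ha

lemma exists_quotient_addEquiv_of_leftInverse {φ : M →+ N} {ρ : N →+ M}
    (hρφ : Function.LeftInverse ρ φ) {Z B : AddSubgroup M} {Z' B' : AddSubgroup N}
    (hφZ : ∀ a ∈ Z, φ a ∈ Z') (hφB : ∀ a ∈ B, φ a ∈ B')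
    (hρZ : ∀ b ∈ Z', ρ b ∈ Z) (hρB : ∀ b ∈ B', ρ b ∈ B)
    (hker : ∀ b ∈ Z', ρ b = 0 → b ∈ B') :
    ∃ e : (Z ⧸ B.addSubgroupOf Z) ≃+ (Z' ⧸ B'.addSubgroupOf Z'),
      ∀ (a : M) (ha : a ∈ Z) (hb : φ a ∈ Z'),
        e (QuotientAddGroup.mk ⟨a, ha⟩) = QuotientAddGroup.mk ⟨φ a, hb⟩ := by
  let φZ : Z →+ Z' := (φ.comp Z.subtype).codRestrict Z' fun a => hφZ a a.2
  let q : Z ⧸ B.addSubgroupOf Z →+ Z' ⧸ B'.addSubgroupOf Z' :=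
    QuotientAddGroup.map _ _ φZ fun a ha => hφB a ha
  have q_injective : Function.Injective q := by
    refine (injective_iff_map_eq_zero q).2 fun x => QuotientAddGroup.induction_on x fun a ha => ?_
    have φa_mem : φ a ∈ B' := (QuotientAddGroup.eq_zero_iff (φZ a)).1 ha
    exact (QuotientAddGroup.eq_zero_iff a).2 (hρφ (a : M) ▸ hρB _ φa_mem :)
  have q_surjective : Function.Surjective q := fun y => QuotientAddGroup.induction_on y fun b => by
    have sub_mem : φ (ρ b) - b ∈ B' :=
      hker _ (Z'.sub_mem (hφZ _ (hρZ b b.2)) b.2) (by rw [map_sub, hρφ, sub_self])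
    refine ⟨QuotientAddGroup.mk ⟨ρ b, hρZ b b.2⟩, sub_eq_zero.1 ?_⟩
    exact (QuotientAddGroup.eq_zero_iff (φZ ⟨ρ b, hρZ b b.2⟩ - b)).2 sub_mem
  exact ⟨AddEquiv.ofBijective q ⟨q_injective, q_surjective⟩, fun _ _ _ => rfl⟩

variable {f : M →+ M} {g : N →+ N} {φ : M →+ N} {ρ : N →+ M}

theorem exists_hPlus_addEquiv_of_leftInverse (hρφ : Function.LeftInverse ρ φ)
    (hφ : ∀ a, φ (f a) = g (φ a)) (hρ : ∀ b, ρ (g b) = f (ρ b))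
    (hker : ∀ b, g b = b → ρ b = 0 → ∃ w, w + g w = b) :
    ∃ e : hPlus f ≃+ hPlus g, ∀ (a : M) (ha : a ∈ kerP f) (hb : φ a ∈ kerP g),
      e (hPlusMk f a ha) = hPlusMk g (φ a) hb :=
  exists_quotient_addEquiv_of_leftInverse hρφ (fun _ => map_mem_kerP hφ) (fun _ => map_mem_imP hφ)
    (fun _ => map_mem_kerP hρ) (fun _ => map_mem_imP hρ)
    fun b hb h0 => mem_imP.2 (hker b (mem_kerP.1 hb) h0)

theorem exists_hMinus_addEquiv_of_leftInverse (hρφ : Function.LeftInverse ρ φ)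
    (hφ : ∀ a, φ (f a) = g (φ a)) (hρ : ∀ b, ρ (g b) = f (ρ b))
    (hker : ∀ b, g b = -b → ρ b = 0 → ∃ w, w - g w = b) :
    ∃ e : hMinus f ≃+ hMinus g, ∀ (a : M) (ha : a ∈ kerM f) (hb : φ a ∈ kerM g),
      e (hMinusMk f a ha) = hMinusMk g (φ a) hb :=
  exists_quotient_addEquiv_of_leftInverse hρφ (fun _ => map_mem_kerM hφ) (fun _ => map_mem_imM hφ)
    (fun _ => map_mem_kerM hρ) (fun _ => map_mem_imM hρ)
    fun b hb h0 => mem_imM.2 (hker b (mem_kerM.1 hb) h0)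

end Tate

/-! ### Permutation modules -/

lemma exists_add_apply_eq_of_involutive {X G : Type*} [AddCommMonoid G] {τ : X → X}
    (hτ : Function.Involutive τ) {α : G →+ G} (b : X →₀ G)
    (hb : ∀ x, α (b (τ x)) = b x) (hfix : ∀ x, τ x = x → b x = 0) :
    ∃ w : X →₀ G, ∀ x, w x + α (w (τ x)) = b x := by
  classical
  -- An arbitrary linear order picks one point of each two-element orbit.
  let _ : LinearOrder X := linearOrderOfSTO WellOrderingRel
  refine ⟨b.filter fun x => x < τ x, fun x => ?_⟩
  rw [Finsupp.filter_apply, Finsupp.filter_apply, hτ x]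
  rcases lt_trichotomy x (τ x) with h | h | h
  · rw [if_pos h, if_neg h.not_gt, map_zero, add_zero]
  · rw [← h, if_neg (lt_irrefl x), map_zero, add_zero, hfix x h.symm]
  · rw [if_neg h.not_gt, if_pos h, hb, zero_add]

section Monomial

open AddMonoidAlgebra Function

lemma coeff_eq_zero_of_comapDomain_eq_zero {R X Y : Type*} [Semiring R] {i : X → Y}
    (hi : Injective i) {b : AddMonoidAlgebra R Y} (hb : comapDomain i hi b = 0)
    {y : Y} (hy : y ∈ Set.range i) : b.coeff y = 0 := by
  obtain ⟨x, rfl⟩ := hy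
  simpa using congrArg (fun a => a.coeff x) hb

/-- An additive map `f : R[X] → R[Y]` is monomial over `σ : X → Y` if it is the `R`-linear extension
of `σ`, i.e. sends basis elements to basis elements as `σ` prescribes. -/
def IsMonomialMap {R X Y : Type*} [Semiring R] (f : AddMonoidAlgebra R X →+ AddMonoidAlgebra R Y)
    (σ : X → Y) : Prop :=
  ∀ x r, f (single x r) = single (σ x) r

namespace IsMonomialMap

section Semiring

variable {R X Y : Type*} [Semiring R]
  {f : AddMonoidAlgebra R X →+ AddMonoidAlgebra R X}
  {g : AddMonoidAlgebra R Y →+ AddMonoidAlgebra R Y}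
  {φ : AddMonoidAlgebra R X →+ AddMonoidAlgebra R Y}
  {σ : X → X} {τ : Y → Y} {i : X → Y}

lemma coeff_apply (hg : IsMonomialMap g τ) (hτ : Involutive τ) (b : AddMonoidAlgebra R Y) (y : Y) :
    (g b).coeff y = b.coeff (τ y) := by
  classical
  induction b using AddMonoidAlgebra.induction_linear with
  | zero => simp
  | add b b' hb hb' => simp [hb, hb']
  | single x r => simp [hg x r, Finsupp.single_apply, hτ.eq_iff]

lemma map_apply_eq_apply_map (hf : IsMonomialMap f σ) (hg : IsMonomialMap g τ)
    (hφ : IsMonomialMap φ i) (h : Semiconj i σ τ) (a : AddMonoidAlgebra R X) :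
    φ (f a) = g (φ a) := by
  have comp_eq : φ.comp f = g.comp φ := addMonoidHom_ext fun x r => by simp [hf x, hg _, hφ _, h x]
  exact DFunLike.congr_fun comp_eq a

lemma comapDomain_leftInverse (hφ : IsMonomialMap φ i) (hi : Injective i) :
    LeftInverse (comapDomainAddMonoidHom (R := R) i hi) φ := by
  have comp_eq : (comapDomainAddMonoidHom i hi).comp φ = AddMonoidHom.id _ :=
    addMonoidHom_ext fun x r => by simp [hφ x]
  exact DFunLike.congr_fun comp_eq

lemma comapDomain_apply (hf : IsMonomialMap f σ) (hg : IsMonomialMap g τ) (hτ : Involutive τ)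
    (hi : Injective i) (h : Semiconj i σ τ) (b : AddMonoidAlgebra R Y) :
    comapDomain i hi (g b) = f (comapDomain i hi b) := by
  have hσ : Involutive σ := fun x => hi (by rw [h, h, hτ])
  ext x
  simp [hf.coeff_apply hσ, hg.coeff_apply hτ, h x]

lemma exists_add_apply_eq (hg : IsMonomialMap g τ) (hτ : Involutive τ) {b : AddMonoidAlgebra R Y}
    (hb : g b = b) (hfix : ∀ y, τ y = y → b.coeff y = 0) : ∃ w, w + g w = b := by
  obtain ⟨w, hw⟩ := exists_add_apply_eq_of_involutive hτ (α := AddMonoidHom.id R) b.coeff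
    (fun y => by rw [AddMonoidHom.id_apply, ← hg.coeff_apply hτ, hb]) hfix
  refine ⟨.ofCoeff w, ?_⟩
  ext y
  simpa [hg.coeff_apply hτ] using hw y

end Semiring

section Ring

variable {R X Y : Type*} [Ring R]
  {f : AddMonoidAlgebra R X →+ AddMonoidAlgebra R X}
  {g : AddMonoidAlgebra R Y →+ AddMonoidAlgebra R Y}
  {φ : AddMonoidAlgebra R X →+ AddMonoidAlgebra R Y}
  {σ : X → X} {τ : Y → Y} {i : X → Y}

lemma exists_sub_apply_eq (hg : IsMonomialMap g τ) (hτ : Involutive τ) {b : AddMonoidAlgebra R Y}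
    (hb : g b = -b) (hfix : ∀ y, τ y = y → b.coeff y = 0) : ∃ w, w - g w = b := by
  obtain ⟨w, hw⟩ := exists_add_apply_eq_of_involutive hτ (α := -AddMonoidHom.id R) b.coeff
    (fun y => by simp [← hg.coeff_apply hτ, hb]) hfix
  refine ⟨.ofCoeff w, ?_⟩
  ext y
  simpa [hg.coeff_apply hτ, sub_eq_add_neg] using hw y

theorem exists_hPlus_addEquiv (hf : IsMonomialMap f σ) (hg : IsMonomialMap g τ)
    (hφ : IsMonomialMap φ i) (hτ : Involutive τ) (hi : Injective i) (h : Semiconj i σ τ)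
    (hfix : fixedPoints τ ⊆ Set.range i) :
    ∃ e : hPlus f ≃+ hPlus g, ∀ a (ha : a ∈ kerP f) (hb : φ a ∈ kerP g),
      e (hPlusMk f a ha) = hPlusMk g (φ a) hb :=
  exists_hPlus_addEquiv_of_leftInverse (hφ.comapDomain_leftInverse hi)
    (hf.map_apply_eq_apply_map hg hφ h) (hf.comapDomain_apply hg hτ hi h) fun _ hb h0 =>
      hg.exists_add_apply_eq hτ hb fun _ hy => coeff_eq_zero_of_comapDomain_eq_zero hi h0 (hfix hy)

theorem exists_hMinus_addEquiv (hf : IsMonomialMap f σ) (hg : IsMonomialMap g τ)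
    (hφ : IsMonomialMap φ i) (hτ : Involutive τ) (hi : Injective i) (h : Semiconj i σ τ)
    (hfix : fixedPoints τ ⊆ Set.range i) :
    ∃ e : hMinus f ≃+ hMinus g, ∀ a (ha : a ∈ kerM f) (hb : φ a ∈ kerM g),
      e (hMinusMk f a ha) = hMinusMk g (φ a) hb :=
  exists_hMinus_addEquiv_of_leftInverse (hφ.comapDomain_leftInverse hi)
    (hf.map_apply_eq_apply_map hg hφ h) (hf.comapDomain_apply hg hτ hi h) fun _ hb h0 =>
      hg.exists_sub_apply_eq hτ hb fun _ hy => coeff_eq_zero_of_comapDomain_eq_zero hi h0 (hfix hy)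

end Ring

end IsMonomialMap

lemma isMonomialMap_mulLeft_single {R X : Type*} [Semiring R] [Add X] (z : X) :
    IsMonomialMap (AddMonoidHom.mulLeft (single z (1 : R))) (z + ·) := fun x r => by
  simp [single_mul_single]

end Monomial

/-! ### The involutions on monomials -/

section TwistedMonomials

open Function

lemma twSwap_involutive : Involutive (twSwap (I := I) (J := J)) := by
  rintro (⟨i, b⟩ | j) <;> simp [twSwap]

lemma le_of_natCast_zmod_two_eq {a b : ℕ} (ha : a ≤ 1) (h : (a : ZMod 2) = b) : a ≤ b := by
  rw [ZMod.natCast_eq_natCast_iff'] at h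
  omega

/-- The exponent vector of the monomial `ζ_t = μ^{j₀} x^{k₀}`. -/
def twZetaMon (j₀ : J → ℕ) (k₀ : K → ℤ) : TwMon I J K :=
  (Sum.elim 0 j₀, k₀)

lemma exists_eq_twZetaMon_add {j₀ : J → ℕ} (k₀ : K → ℤ) {u : TwMon I J K}
    (hu : ∀ j, j₀ j ≤ u.1 (Sum.inr j)) : ∃ w, twZetaMon j₀ k₀ + w = u := by
  refine ⟨(u.1 - (twZetaMon j₀ k₀).1, u.2 - k₀), Prod.ext ?_ (add_sub_cancel k₀ u.2)⟩
  refine add_tsub_cancel_of_le fun g => ?_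
  rcases g with g | j
  exacts [Nat.zero_le _, hu j]

variable [Fintype I] [Fintype J] (c : I → K → ℤ) (m : J → K → ℤ) (t : K → ℤ)

lemma twTwist_comp_twSwap (f : TwGens I J → ℕ) : twTwist c m (f ∘ twSwap) = twTwist c m f := by
  funext k
  simp [twTwist, twSwap, add_comm]

/-- The permutation of the monomials by which `⋆_t` acts on `A`, written on exponent vectors. -/
def twStarTMon (u : TwMon I J K) : TwMon I J K :=
  twStarMon c m u + (0, t)

lemma twStarTMon_involutive : Involutive (twStarTMon (I := I) c m t) := fun ⟨f, v⟩ => by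
  refine Prod.ext ?_ ?_
  · simp [twStarTMon, twStarMon, comp_assoc, twSwap_involutive.comp_self]
  · simp only [twStarTMon, twStarMon, AddMonoidHom.coe_mk, ZeroHom.coe_mk, Prod.mk_add_mk, add_zero,
      twTwist_comp_twSwap]
    abel

variable {c m t}

lemma twStarTMon_add {z : TwMon I J K} (hz : twStarTMon c m t z = z) (u : TwMon I J K) :
    twStarTMon c m t (z + u) = z + twStarMon c m u := by
  conv_rhs => rw [← hz]
  simp only [twStarTMon, map_add, add_right_comm]

lemma twStarTMon_eq_self_iff {u : TwMon I J K} :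
    twStarTMon c m t u = u ↔ u.1 ∘ twSwap = u.1 ∧ ∀ k, 2 * u.2 k = twTwist c m u.1 k + t k := by
  refine Prod.ext_iff.trans (and_congr ?_ (funext_iff.trans (forall_congr' fun k => ?_)))
  · simp [twStarTMon, twStarMon]
  · simp only [twStarTMon, twStarMon, AddMonoidHom.coe_mk, ZeroHom.coe_mk, Prod.snd_add,
      Pi.add_apply, Pi.neg_apply]
    lia

lemma intCast_twTwist_of_comp_twSwap {f : TwGens I J → ℕ} (hf : f ∘ twSwap = f) (k : K) :
    (twTwist c m f k : ZMod 2) = ∑ j, (f (Sum.inr j) : ZMod 2) * (m j k : ZMod 2) := by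
  have symm (i : I) : f (Sum.inl (i, true)) = f (Sum.inl (i, false)) :=
    congrFun hf (Sum.inl (i, false))
  simp [twTwist, symm, CharTwo.add_self_eq_zero]

lemma natCast_eq_of_twStarTMon_eq_self
    (hLI : LinearIndependent (ZMod 2) fun (j : J) (k : K) => (m j k : ZMod 2))
    {u v : TwMon I J K} (hu : twStarTMon c m t u = u) (hv : twStarTMon c m t v = v) (j : J) :
    (u.1 (Sum.inr j) : ZMod 2) = v.1 (Sum.inr j) := by
  have sum_eq {w : TwMon I J K} (hw : twStarTMon c m t w = w) (k : K) :
      ∑ j, (w.1 (Sum.inr j) : ZMod 2) * (m j k : ZMod 2) = t k := by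
    obtain ⟨symm, two_mul_eq⟩ := twStarTMon_eq_self_iff.1 hw
    have cast_eq := congrArg (Int.cast : ℤ → ZMod 2) (two_mul_eq k)
    push_cast at cast_eq
    rw [intCast_twTwist_of_comp_twSwap symm, CharTwo.two_eq_zero (R := ZMod 2), zero_mul] at cast_eq
    exact CharTwo.add_eq_zero.1 cast_eq.symm
  refine sub_eq_zero.1 (Fintype.linearIndependent_iff.1 hLI
    (fun j => (u.1 (Sum.inr j) : ZMod 2) - v.1 (Sum.inr j)) ?_ j)
  funext k
  simp [sub_mul, sum_eq hu, sum_eq hv]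

lemma twStarTMon_twZetaMon {j₀ : J → ℕ} {k₀ : K → ℤ}
    (hk₀ : ∀ k, 2 * k₀ k = (∑ j, (j₀ j : ℤ) * m j k) + t k) :
    twStarTMon c m t (twZetaMon j₀ k₀) = twZetaMon j₀ k₀ := by
  refine twStarTMon_eq_self_iff.2 ⟨?_, fun k => by simp [twZetaMon, twTwist, hk₀ k]⟩
  funext g
  rcases g with ⟨i, b⟩ | j <;> rfl

lemma fixedPoints_twStarTMon_subset_range
    (hLI : LinearIndependent (ZMod 2) fun (j : J) (k : K) => (m j k : ZMod 2))
    {j₀ : J → ℕ} (hj₀ : ∀ j, j₀ j ≤ 1) {k₀ : K → ℤ}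
    (hζ : twStarTMon c m t (twZetaMon (I := I) j₀ k₀) = twZetaMon j₀ k₀) :
    fixedPoints (twStarTMon (I := I) c m t) ⊆ Set.range (twZetaMon j₀ k₀ + ·) := fun _ hu =>
  exists_eq_twZetaMon_add k₀ fun j =>
    le_of_natCast_zmod_two_eq (hj₀ j) (natCast_eq_of_twStarTMon_eq_self hLI hζ hu j)

variable (c m t)

lemma isMonomialMap_twStar :
    IsMonomialMap (twStar (I := I) c m).toAddMonoidHom (twStarMon c m) := fun _ _ =>
  AddMonoidAlgebra.mapDomain_single

lemma isMonomialMap_twStarT : IsMonomialMap (twStarT (I := I) c m t) (twStarTMon c m t) :=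
  fun u r => (congrArg (· * twX t) (isMonomialMap_twStar c m u r)).trans <| by
    simp [twX, twStarTMon, AddMonoidAlgebra.single_mul_single]

end TwistedMonomials

theorem statement9_general {I J K : Type} [Fintype I] [Fintype J]
    (c : I → K → ℤ) (m : J → K → ℤ)
    (hLI : LinearIndependent (ZMod 2) fun (j : J) (k : K) => (m j k : ZMod 2))
    (t : K → ℤ) (j₀ : J → ℕ) (hj₀ : ∀ j, j₀ j ≤ 1)
    (k₀ : K → ℤ) (hk₀ : ∀ k, 2 * k₀ k = (∑ j, (j₀ j : ℤ) * m j k) + t k) :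
    let ζ : TwPolyRing I J K := AddMonoidAlgebra.single (twZetaMon j₀ k₀) 1
    twStarT c m t ζ = ζ ∧
    (∃ e : hPlus ((twStar c m).toAddMonoidHom : TwPolyRing I J K →+ TwPolyRing I J K) ≃+
        hPlus (twStarT c m t),
      ∀ a (ha : a ∈ kerP (twStar c m).toAddMonoidHom) (hb : ζ * a ∈ kerP (twStarT c m t)),
        e (hPlusMk _ a ha) = hPlusMk (twStarT c m t) (ζ * a) hb) ∧
    (∃ e : hMinus ((twStar c m).toAddMonoidHom : TwPolyRing I J K →+ TwPolyRing I J K) ≃+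
        hMinus (twStarT c m t),
      ∀ a (ha : a ∈ kerM (twStar c m).toAddMonoidHom) (hb : ζ * a ∈ kerM (twStarT c m t)),
        e (hMinusMk _ a ha) = hMinusMk (twStarT c m t) (ζ * a) hb) := by
  intro ζ
  have hζ : twStarTMon c m t (twZetaMon (I := I) j₀ k₀) = twZetaMon j₀ k₀ :=
    twStarTMon_twZetaMon hk₀
  have hfix := fixedPoints_twStarTMon_subset_range hLI hj₀ hζ
  have star := isMonomialMap_twStar (I := I) c m
  have starT := isMonomialMap_twStarT (I := I) c m t
  have mul_ζ : IsMonomialMap (AddMonoidHom.mulLeft ζ) (twZetaMon j₀ k₀ + ·) :=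
    isMonomialMap_mulLeft_single _
  have involutive := twStarTMon_involutive (I := I) c m t
  have injective := add_right_injective (twZetaMon (I := I) j₀ k₀)
  have semiconj : Function.Semiconj (twZetaMon j₀ k₀ + ·) (twStarMon c m) (twStarTMon c m t) :=
    fun u => (twStarTMon_add hζ u).symm
  have plus := star.exists_hPlus_addEquiv starT mul_ζ involutive injective semiconj hfix
  have minus := star.exists_hMinus_addEquiv starT mul_ζ involutive injective semiconj hfix
  exact ⟨(starT _ _).trans (by rw [hζ]), plus, minus⟩

/-- Assume the mod-2 reductions `m̄ʲ` of the twist vectors are linearly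
independent over `𝔽₂` and let `t ∈ ℤ^K` with `t̄` in their span, so that there is a unique
`j₀ ∈ {0,1}^J` with `M̄·j̄₀ = t̄`.  Set `k₀ := (M·j₀ + t)/2` and `ζ_t := μ^{j₀}·x^{k₀}`.
Then `ζ_t` is `⋆_t`-self-dual, and multiplication by `ζ_t` induces isomorphisms
`h⁺(A) → h⁺(A, x^t)` and `h⁻(A) → h⁻(A, x^t)`. -/
theorem statement9 {I J K : Type} [Fintype I] [Fintype J] [Fintype K]
    (c : I → K → ℤ) (m : J → K → ℤ)
    (hLI : LinearIndependent (ZMod 2) fun j : J => (fun k => ((m j k : ZMod 2)) : K → ZMod 2))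
    (t : K → ℤ)
    (j₀ : J → ℕ) (hj₀ : ∀ j, j₀ j ≤ 1)
    (hsol : ∀ k : K, (∑ j : J, (j₀ j : ZMod 2) * ((m j k : ℤ) : ZMod 2)) = ((t k : ZMod 2)))
    (k₀ : K → ℤ) (hk₀ : ∀ k : K, 2 * k₀ k = (∑ j : J, (j₀ j : ℤ) * m j k) + t k)
    -- `ζ_t = μ^{j₀}·x^{k₀}`
    (ζ : TwPolyRing I J K)
    (hζdef : ζ = AddMonoidAlgebra.single
      ((fun g => Sum.elim (fun _ => 0) (fun j => j₀ j) g : TwGens I J → ℕ), k₀) 1) :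
    twStarT c m t ζ = ζ ∧
    (∃ e : hPlus ((twStar c m).toAddMonoidHom : TwPolyRing I J K →+ TwPolyRing I J K) ≃+
        hPlus (twStarT c m t),
      ∀ (a : TwPolyRing I J K) (ha : a ∈ kerP (twStar c m).toAddMonoidHom)
        (hb : ζ * a ∈ kerP (twStarT c m t)),
        e (hPlusMk _ a ha) = hPlusMk (twStarT c m t) (ζ * a) hb) ∧
    (∃ e : hMinus ((twStar c m).toAddMonoidHom : TwPolyRing I J K →+ TwPolyRing I J K) ≃+
        hMinus (twStarT c m t),
      ∀ (a : TwPolyRing I J K) (ha : a ∈ kerM (twStar c m).toAddMonoidHom)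
        (hb : ζ * a ∈ kerM (twStarT c m t)),
        e (hMinusMk _ a ha) = hMinusMk (twStarT c m t) (ζ * a) hb) := by
  subst hζdef
  exact statement9_general c m hLI t j₀ hj₀ k₀ hk₀
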